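/- Let K ⊂ ℝ² be a centrally symmetric compact convex polygon that is a Minkowski sum of segments (a zonotope) K = Σ_{i=1}^m λ_i [−u_i, u_i] with λ_i ≥ 0. Then ∫_K |s|² ds is a polynomial in (λ₁,…,λ_m) with nonnegative coefficients. -/

import Mathlib

open Pointwise MeasureTheory

/-!
Write `[K]` for the indicator function of `K`, `V = [-v, v]` and `W = [-w, w]`. If the convex set
`K` lies in the angle spanned by `v` and `-w` at one of its points `q`, then, up to null sets,
`[K + V + W] + [K + v - w] = [K + V - w] + [K + W + v] + [q + V + W]`.
Translating a centrally symmetric set by `c` adds `‖c‖²` times its area to its second moment, so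
this compares the increments of the second moment due to `W` at `K + V` and at `K`.

When the generators `a i • (cos θ i, sin θ i)`, with all `θ i` in `[0, π)`, are added by increasing
angle, the sum of the negated generators is such a point `q`. Apart from evidently nonnegative
terms, the comparison then involves only `cos β * area K + 2 * sin β * ‖q‖²`, where `β` is the angle
from `v` to `w`. The area is the sum over pairs of generators of `4 * a i * a j * sin (θ j - θ i)`,
and `‖q‖²` is that of `2 * a i * a j * cos (θ j - θ i)` plus squares. So the pair `i, j` contributes
`4 * a i * a j * sin (θ j - θ i + β)`, which is nonnegative because `θ j - θ i + β` is at most `π`.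
-/

section NonnegPolynomial

variable {σ : Type*}

/-- The functions of nonnegative variables that are polynomials with nonnegative coefficients. As
both the variables and the coefficients range over `ℝ≥0`, closure under sums and products is part of
the `ℝ≥0`-subalgebra structure. -/
def nonnegPolynomials (σ : Type*) : Subalgebra NNReal ((σ → NNReal) → ℝ) :=
  Algebra.adjoin NNReal (Set.range fun i a => (a i : ℝ))

theorem coord_mem_nonnegPolynomials (i : σ) :
    (fun a : σ → NNReal => (a i : ℝ)) ∈ nonnegPolynomials σ :=
  Algebra.subset_adjoin ⟨i, rfl⟩

theorem const_mem_nonnegPolynomials {r : ℝ} (hr : 0 ≤ r) :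
    (fun _ : σ → NNReal => r) ∈ nonnegPolynomials σ :=
  (nonnegPolynomials σ).algebraMap_mem ⟨r, hr⟩

theorem sum_mem_nonnegPolynomials {κ : Type*} {s : Finset κ} {F : κ → (σ → NNReal) → ℝ}
    (hF : ∀ i ∈ s, F i ∈ nonnegPolynomials σ) :
    (fun a => ∑ i ∈ s, F i a) ∈ nonnegPolynomials σ := by
  rw [← Finset.sum_fn]
  exact sum_mem hF

theorem comp_mul_left_mem_nonnegPolynomials {F : (σ → NNReal) → ℝ}
    (hF : F ∈ nonnegPolynomials σ) (r : σ → NNReal) :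
    (fun a => F (r * a)) ∈ nonnegPolynomials σ := by
  induction hF using Algebra.adjoin_induction with
  | mem F hF =>
    obtain ⟨i, rfl⟩ := hF
    exact mul_mem (const_mem_nonnegPolynomials (r i).2) (coord_mem_nonnegPolynomials i)
  | algebraMap c => exact (nonnegPolynomials σ).algebraMap_mem c
  | add F G _ _ hF hG => exact add_mem hF hG
  | mul F G _ _ hF hG => exact mul_mem hF hG

theorem exists_mvPolynomial_of_mem_nonnegPolynomials {F : (σ → NNReal) → ℝ}
    (hF : F ∈ nonnegPolynomials σ) :
    ∃ p : MvPolynomial σ ℝ, (∀ n, 0 ≤ MvPolynomial.coeff n p) ∧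
      ∀ a : σ → NNReal, F a = MvPolynomial.eval (fun i => (a i : ℝ)) p := by
  rw [nonnegPolynomials, Algebra.adjoin_range_eq_range_aeval] at hF
  obtain ⟨p, rfl⟩ := hF
  refine ⟨p.map NNReal.toRealHom, fun n => ?_, fun a => ?_⟩
  · rw [MvPolynomial.coeff_map]
    exact (p.coeff n).2
  · rw [MvPolynomial.eval_map]
    exact MvPolynomial.map_aeval _ (Pi.evalRingHom (fun _ => ℝ) a) p

end NonnegPolynomial

section SymSegment

variable {E : Type*} [AddCommGroup E] [Module ℝ E] {v : E}

/-- The centrally symmetric segment `[-v, v]`. -/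
def symSegment (v : E) : Set E := segment ℝ (-v) v

theorem image_symSegment {F : Type*} [AddCommGroup F] [Module ℝ F] (f : E →ₗ[ℝ] F) (v : E) :
    f '' symSegment v = symSegment (f v) := by
  simpa [symSegment] using image_segment ℝ f.toAffineMap (-v) v

theorem symSegment_eq_image (v : E) : symSegment v = (fun t : ℝ => t • v) '' Set.Icc (-1) 1 := by
  rw [← segment_eq_Icc (by norm_num)]
  simpa [symSegment] using (image_symSegment (LinearMap.toSpanSingleton ℝ E v) 1).symm

theorem mem_symSegment {z : E} : z ∈ symSegment v ↔ ∃ t ∈ Set.Icc (-1 : ℝ) 1, t • v = z := by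
  rw [symSegment_eq_image, Set.mem_image]

@[simp]
theorem symSegment_zero : symSegment (0 : E) = 0 := by
  simp [symSegment, Set.singleton_zero]

theorem symSegment_neg (v : E) : symSegment (-v) = symSegment v := by
  rw [symSegment, neg_neg, segment_symm, symSegment]

theorem neg_symSegment (v : E) : -symSegment v = symSegment v := by
  rw [← Set.image_neg_eq_neg]
  exact (image_symSegment (-LinearMap.id) v).trans (symSegment_neg v)

theorem convex_symSegment (v : E) : Convex ℝ (symSegment v) := convex_segment _ _

theorem self_mem_symSegment (v : E) : v ∈ symSegment v := right_mem_segment ℝ _ _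

theorem neg_self_mem_symSegment (v : E) : -v ∈ symSegment v := left_mem_segment ℝ _ _

theorem symSegment_subset_span (v : E) : symSegment v ⊆ (Submodule.span ℝ {v} : Submodule ℝ E) := by
  rw [symSegment_eq_image]
  rintro _ ⟨t, -, rfl⟩
  exact Submodule.smul_mem _ t (Submodule.mem_span_singleton_self v)

theorem smul_mem_symSegment_smul {r a : ℝ} (h : |r| ≤ a) (e : E) : r • e ∈ symSegment (a • e) := by
  obtain rfl | ha := ((abs_nonneg r).trans h).eq_or_lt
  · simp [abs_nonpos_iff.1 h]
  · have h' : |r / a| ≤ 1 := by rwa [abs_div, abs_of_pos ha, div_le_one ha]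
    exact mem_symSegment.2 ⟨r / a, abs_le.1 h', by rw [smul_smul, div_mul_cancel₀ _ ha.ne']⟩

theorem symSegment_smul (c : ℝ) (v : E) : symSegment (c • v) = c • symSegment v :=
  (image_symSegment (LinearMap.lsmul ℝ E c) v).symm

theorem isCompact_symSegment {F : Type*} [NormedAddCommGroup F] [NormedSpace ℝ F] (v : F) :
    IsCompact (symSegment v) := by
  rw [symSegment_eq_image]
  exact isCompact_Icc.image (by fun_prop)

end SymSegment

section Dissection

variable {E : Type*} [AddCommGroup E] [Module ℝ E] {v w q : E} {K : Set E}

/-- The set `K + [-v, v] + [-w, w]` is the union of a translate of `K + [-v, v]`, a translate of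
`K + [-w, w]` and the parallelogram `q + [-v, v] + [-w, w]`; the first two meet in a translate of
`K`, and the parallelogram meets them only along the lines carrying two of its sides. -/
structure IsDissection (K : Set E) (q v w : E) : Prop where
  eq_union : K + symSegment v + symSegment w =
    (-w +ᵥ (K + symSegment v)) ∪ (v +ᵥ (K + symSegment w)) ∪
      (q +ᵥ (symSegment v + symSegment w))
  inter_eq : (-w +ᵥ (K + symSegment v)) ∩ (v +ᵥ (K + symSegment w)) = (v - w) +ᵥ K
  inter_subset : ((-w +ᵥ (K + symSegment v)) ∪ (v +ᵥ (K + symSegment w))) ∩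
      (q +ᵥ (symSegment v + symSegment w)) ⊆
    ((q - w) +ᵥ (Submodule.span ℝ {v} : Set E)) ∪ ((q + v) +ᵥ (Submodule.span ℝ {w} : Set E))

theorem union_vadd_subset_add_symSegment (hq : q ∈ K) :
    (-w +ᵥ (K + symSegment v)) ∪ (v +ᵥ (K + symSegment w)) ∪
      (q +ᵥ (symSegment v + symSegment w)) ⊆ K + symSegment v + symSegment w := by
  rintro _ ((⟨_, ⟨k, hk, s, hs, rfl⟩, rfl⟩ | ⟨_, ⟨k, hk, t, ht, rfl⟩, rfl⟩) |
    ⟨_, ⟨s, hs, t, ht, rfl⟩, rfl⟩)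
  · exact ⟨k + s, ⟨k, hk, s, hs, rfl⟩, -w, neg_self_mem_symSegment w, add_comm _ _⟩
  · exact ⟨k + v, ⟨k, hk, v, self_mem_symSegment v, rfl⟩, t, ht, by simp only [vadd_eq_add]; abel⟩
  · exact ⟨q + s, ⟨q, hq, s, hs, rfl⟩, t, ht, add_assoc _ _ _⟩

theorem vadd_subset_inter_vadd_add_symSegment (K : Set E) (v w : E) :
    (v - w) +ᵥ K ⊆ (-w +ᵥ (K + symSegment v)) ∩ (v +ᵥ (K + symSegment w)) := by
  rintro _ ⟨k, hk, rfl⟩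
  exact ⟨⟨k + v, ⟨k, hk, v, self_mem_symSegment v, rfl⟩, by simp only [vadd_eq_add]; abel⟩,
    ⟨k + -w, ⟨k, hk, -w, neg_self_mem_symSegment w, rfl⟩, by simp only [vadd_eq_add]; abel⟩⟩

theorem add_symSegment_subset_of_sameRay (h : SameRay ℝ v w) :
    K + symSegment v + symSegment w ⊆
      (-w +ᵥ (K + symSegment v)) ∪ (v +ᵥ (K + symSegment w)) := by
  obtain ⟨e, a, b, ha, hb, -, rfl, rfl⟩ := h.exists_eq_smul
  rintro _ ⟨_, ⟨k, hk, _, hs, rfl⟩, _, ht, rfl⟩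
  obtain ⟨s, ⟨hs₁, hs₂⟩, rfl⟩ := mem_symSegment.1 hs
  obtain ⟨t, ⟨ht₁, ht₂⟩, rfl⟩ := mem_symSegment.1 ht
  rcases le_total (s * a + t * b) (a - b) with h | h
  · refine .inl ⟨_, ⟨k, hk, _, smul_mem_symSegment_smul (r := s * a + t * b + b) ?_ e, rfl⟩, ?_⟩
    · exact abs_le.2 ⟨by nlinarith, by linarith⟩
    · simp only [vadd_eq_add]; module
  · refine .inr ⟨_, ⟨k, hk, _, smul_mem_symSegment_smul (r := s * a + t * b - a) ?_ e, rfl⟩, ?_⟩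
    · exact abs_le.2 ⟨by linarith, by nlinarith⟩
    · simp only [vadd_eq_add]; module

theorem mem_of_add_smul_mem_of_sub_smul_mem (hK : Convex ℝ K) {z e : E} {σ τ : ℝ} (hσ : 0 ≤ σ)
    (hτ : 0 ≤ τ) (hadd : z + σ • e ∈ K) (hsub : z - τ • e ∈ K) : z ∈ K := by
  obtain h | h := (add_nonneg hσ hτ).eq_or_lt
  · obtain rfl : σ = 0 := by linarith
    simpa using hadd
  · convert! hK hadd hsub (a := τ / (σ + τ)) (b := σ / (σ + τ)) (by positivity) (by positivity)
      (by field_simp; ring) using 1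
    match_scalars <;> field_simp <;> ring

theorem inter_vadd_subset_of_sameRay (hK : Convex ℝ K) (h : SameRay ℝ v w) :
    (-w +ᵥ (K + symSegment v)) ∩ (v +ᵥ (K + symSegment w)) ⊆ (v - w) +ᵥ K := by
  obtain ⟨e, a, b, ha, hb, -, rfl, rfl⟩ := h.exists_eq_smul
  rintro z ⟨⟨_, ⟨k, hk, _, hs, rfl⟩, hz⟩, ⟨_, ⟨l, hl, _, ht, rfl⟩, hz'⟩⟩
  obtain ⟨s, ⟨-, hs₂⟩, rfl⟩ := mem_symSegment.1 hs
  obtain ⟨t, ⟨ht₁, -⟩, rfl⟩ := mem_symSegment.1 ht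
  simp only [vadd_eq_add] at hz hz'
  have hσ : 0 ≤ (1 - s) * a := mul_nonneg (by linarith) ha
  have hτ : 0 ≤ (t + 1) * b := mul_nonneg (by linarith) hb
  refine ⟨z - (a • e - b • e), mem_of_add_smul_mem_of_sub_smul_mem hK hσ hτ (e := e) ?_ ?_,
    by simp [vadd_eq_add]⟩
  · convert! hk using 1
    rw [← hz]
    module
  · convert! hl using 1
    rw [← hz']
    module

theorem symSegment_add_subset_span_of_sameRay (h : SameRay ℝ v w) :
    q +ᵥ (symSegment v + symSegment w) ⊆
      ((q - w) +ᵥ (Submodule.span ℝ {v} : Set E)) ∪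
        ((q + v) +ᵥ (Submodule.span ℝ {w} : Set E)) := by
  rintro _ ⟨_, ⟨s, hs, t, ht, rfl⟩, rfl⟩
  replace hs := symSegment_subset_span v hs
  replace ht := symSegment_subset_span w ht
  by_cases hv : v = 0
  · subst hv
    obtain rfl : s = 0 := by simpa using hs
    exact .inr ⟨t, ht, by simp [vadd_eq_add]⟩
  · obtain ⟨r, -, rfl⟩ := h.exists_nonneg_left hv
    have hr : r • v ∈ Submodule.span ℝ {v} :=
      Submodule.smul_mem _ r (Submodule.mem_span_singleton_self v)
    have ht' : t ∈ Submodule.span ℝ {v} :=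
      Submodule.span_singleton_smul_le ℝ r v ht
    exact .inl ⟨s + t + r • v, add_mem (add_mem hs ht') hr, by simp only [vadd_eq_add]; abel⟩

theorem isDissection_of_sameRay (hK : Convex ℝ K) (hq : q ∈ K) (h : SameRay ℝ v w) :
    IsDissection K q v w where
  eq_union := ((add_symSegment_subset_of_sameRay h).trans Set.subset_union_left).antisymm
    (union_vadd_subset_add_symSegment hq)
  inter_eq := (inter_vadd_subset_of_sameRay hK h).antisymm
    (vadd_subset_inter_vadd_add_symSegment K v w)
  inter_subset := Set.inter_subset_right.trans (symSegment_add_subset_span_of_sameRay h)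

/-- The set `K` lies in the angle with vertex `q` spanned by `v` and `-w`. For `q ∈ K`, this is the
position of `K` in which the parallelogram of `IsDissection K q v w` fits at the corner `q`. -/
def InAngle (K : Set E) (q v w : E) : Prop :=
  ∀ z ∈ K, ∃ x y : ℝ, 0 ≤ x ∧ 0 ≤ y ∧ z = q + x • v - y • w

/-- The point `k` is moved towards the corner `q` until the coordinate along `v` drops to `1`. -/
theorem mem_vadd_add_symSegment_of_lt {k : E} {s t x y : ℝ} (hK : Convex ℝ K) (hq : q ∈ K)
    (hk : k ∈ K) (hkq : k = q + x • v - y • w) (hx : 0 ≤ x) (hy : 0 ≤ y) (hs : s ≤ 1) (ht : t ≤ 1)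
    (hsx : 1 < s + x) (hst : (1 - s) * y ≤ (t + 1) * x) :
    k + s • v + t • w ∈ v +ᵥ (K + symSegment w) := by
  have hx' : 0 < x := by linarith
  have hρ : 0 ≤ (1 - s) / x := div_nonneg (by linarith) hx
  have hρ₁ : (1 - s) / x ≤ 1 := (div_le_one hx').2 (by linarith)
  refine ⟨_, ⟨k - ((1 - s) / x * x) • v + ((1 - s) / x * y) • w, ?_, _,
    mem_symSegment.2 ⟨t - (1 - s) / x * y, ⟨?_, ?_⟩, rfl⟩, rfl⟩, ?_⟩
  · convert! hK hk hq (sub_nonneg.2 hρ₁) hρ (sub_add_cancel _ _) using 1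
    rw [hkq]
    module
  · rw [div_mul_eq_mul_div, le_sub_comm, div_le_iff₀ hx']
    linarith
  · linarith [mul_nonneg hρ hy]
  · rw [div_mul_cancel₀ _ hx'.ne']
    simp only [vadd_eq_add]
    module

theorem add_symSegment_subset_of_inAngle (hK : Convex ℝ K) (hq : q ∈ K) (h : InAngle K q v w) :
    K + symSegment v + symSegment w ⊆
      (-w +ᵥ (K + symSegment v)) ∪ (v +ᵥ (K + symSegment w)) ∪
        (q +ᵥ (symSegment v + symSegment w)) := by
  rintro _ ⟨_, ⟨k, hk, _, hs, rfl⟩, _, ht, rfl⟩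
  obtain ⟨s, ⟨hs₁, hs₂⟩, rfl⟩ := mem_symSegment.1 hs
  obtain ⟨t, ⟨ht₁, ht₂⟩, rfl⟩ := mem_symSegment.1 ht
  obtain ⟨x, y, hx, hy, hkq⟩ := h k hk
  by_cases hcorner : s + x ≤ 1 ∧ -1 ≤ t - y
  · refine .inr ⟨_, ⟨_, mem_symSegment.2 ⟨s + x, ⟨by linarith, hcorner.1⟩, rfl⟩,
      _, mem_symSegment.2 ⟨t - y, ⟨hcorner.2, by linarith⟩, rfl⟩, rfl⟩, ?_⟩
    simp only [vadd_eq_add, hkq]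
    module
  by_cases hfirst : 1 < s + x ∧ (1 - s) * y ≤ (t + 1) * x
  · exact .inl (.inr (mem_vadd_add_symSegment_of_lt hK hq hk hkq hx hy hs₂ ht₂ hfirst.1 hfirst.2))
  · have hsecond : 1 < -t + y ∧ (1 - -t) * x ≤ (-s + 1) * y := by
      rw [not_and_or, not_le, not_le] at hcorner
      rw [not_and_or, not_lt, not_le] at hfirst
      rcases hfirst with hsx | hst
      · have hty : 1 < -t + y := by rcases hcorner with h | h <;> linarith
        exact ⟨hty, by nlinarith⟩
      · refine ⟨?_, by linarith⟩
        rcases hcorner with h | h <;> nlinarith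
    have hmem := mem_vadd_add_symSegment_of_lt (v := -w) (w := -v) hK hq hk
      (by rw [hkq]; module) hy hx (by linarith) (by linarith) hsecond.1 hsecond.2
    rw [symSegment_neg] at hmem
    refine .inl (.inl ?_)
    convert! hmem using 1
    module

theorem inter_vadd_subset_of_inAngle (hK : Convex ℝ K) (hq : q ∈ K) (h : InAngle K q v w)
    (hvw : LinearIndependent ℝ ![v, w]) :
    (-w +ᵥ (K + symSegment v)) ∩ (v +ᵥ (K + symSegment w)) ⊆ (v - w) +ᵥ K := by
  rintro z ⟨⟨_, ⟨k, hk, _, hs, rfl⟩, hzk⟩, ⟨_, ⟨l, hl, _, ht, rfl⟩, hzl⟩⟩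
  obtain ⟨s, ⟨-, hs₂⟩, rfl⟩ := mem_symSegment.1 hs
  obtain ⟨t, ⟨ht₁, -⟩, rfl⟩ := mem_symSegment.1 ht
  obtain ⟨x, y, hx, hy, rfl⟩ := h k hk
  obtain ⟨x', y', hx', -, rfl⟩ := h l hl
  obtain ⟨hx'x, hyy'⟩ : x - (1 - s) = x' ∧ -y = t + 1 - y' := by
    refine hvw.eq_of_pair (sub_eq_zero.1 ?_)
    rw [← sub_eq_zero.2 (hzk.trans hzl.symm)]
    simp only [vadd_eq_add]
    module
  refine ⟨q + x' • v - y • w, ?_, ?_⟩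
  · obtain rfl | hx₀ := hx.eq_or_lt
    · obtain rfl : x' = 0 := by linarith
      exact hk
    · refine mem_of_add_smul_mem_of_sub_smul_mem (e := w) (σ := (1 - s) * y / x)
        (τ := t + 1) hK (div_nonneg (mul_nonneg (by linarith) hy) hx) (by linarith) ?_ ?_
      · convert! hK hk hq (div_nonneg hx' hx) (div_nonneg (sub_nonneg.2 hs₂) hx)
          (by rw [← add_div, div_eq_one_iff_eq hx₀.ne']; linarith) using 1
        rw [← hx'x]
        match_scalars <;> field_simp <;> ring
      · convert! hl using 1
        rw [show y' = t + 1 + y by linarith]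
        module
  · rw [← hzk, ← hx'x]
    simp only [vadd_eq_add]
    module

theorem inter_vadd_subset_span_of_inAngle (h : InAngle K q v w)
    (hvw : LinearIndependent ℝ ![v, w]) :
    ((-w +ᵥ (K + symSegment v)) ∪ (v +ᵥ (K + symSegment w))) ∩
      (q +ᵥ (symSegment v + symSegment w)) ⊆
    ((q - w) +ᵥ (Submodule.span ℝ {v} : Set E)) ∪
      ((q + v) +ᵥ (Submodule.span ℝ {w} : Set E)) := by
  rintro z ⟨hz, _, ⟨_, ha, _, hb, rfl⟩, hzq⟩
  obtain ⟨a, ⟨ha₁, ha₂⟩, rfl⟩ := mem_symSegment.1 ha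
  obtain ⟨b, ⟨hb₁, hb₂⟩, rfl⟩ := mem_symSegment.1 hb
  have hcoord {c d : ℝ} (hz : q + c • v + d • w = z) : a = c ∧ b = d := by
    refine hvw.eq_of_pair (sub_eq_zero.1 ?_)
    rw [← sub_eq_zero.2 (hzq.trans hz.symm)]
    simp only [vadd_eq_add]
    module
  rcases hz with ⟨_, ⟨k, hk, _, hs, rfl⟩, hzk⟩ | ⟨_, ⟨k, hk, _, hs, rfl⟩, hzk⟩ <;>
    obtain ⟨s, -, rfl⟩ := mem_symSegment.1 hs <;>
    obtain ⟨x, y, hx, hy, rfl⟩ := h k hk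
  · obtain ⟨-, hb⟩ := hcoord (c := x + s) (d := -(y + 1))
      (by rw [← hzk]; simp only [vadd_eq_add]; module)
    obtain rfl : b = -1 := by linarith
    exact .inl ⟨a • v, Submodule.smul_mem _ a (Submodule.mem_span_singleton_self v),
      by rw [← hzq]; simp only [vadd_eq_add]; module⟩
  · obtain ⟨ha, -⟩ := hcoord (c := x + 1) (d := s - y)
      (by rw [← hzk]; simp only [vadd_eq_add]; module)
    obtain rfl : a = 1 := by linarith
    exact .inr ⟨b • w, Submodule.smul_mem _ b (Submodule.mem_span_singleton_self w),
      by rw [← hzq]; simp only [vadd_eq_add]; module⟩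

theorem isDissection_of_inAngle (hK : Convex ℝ K) (hq : q ∈ K) (h : InAngle K q v w)
    (hvw : LinearIndependent ℝ ![v, w]) : IsDissection K q v w where
  eq_union := (add_symSegment_subset_of_inAngle hK hq h).antisymm
    (union_vadd_subset_add_symSegment hq)
  inter_eq := (inter_vadd_subset_of_inAngle hK hq h hvw).antisymm
    (vadd_subset_inter_vadd_add_symSegment K v w)
  inter_subset := inter_vadd_subset_span_of_inAngle h hvw

end Dissection

section DissectionIntegral

theorem setIntegral_union_add_setIntegral_inter {X F : Type*} [MeasurableSpace X] {μ : Measure X}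
    [NormedAddCommGroup F] [NormedSpace ℝ F] {f : X → F} {A B : Set X} (hB : MeasurableSet B)
    (hfA : IntegrableOn f A μ) (hfB : IntegrableOn f B μ) :
    (∫ z in A ∪ B, f z ∂μ) + ∫ z in A ∩ B, f z ∂μ = (∫ z in A, f z ∂μ) + ∫ z in B, f z ∂μ := by
  rw [← Set.sdiff_union_self, setIntegral_union Set.disjoint_sdiff_left hB
    (hfA.mono_set Set.sdiff_subset) hfB, ← integral_inter_add_sdiff hB hfA]
  abel

theorem setIntegral_vadd {G F : Type*} [AddGroup G] [MeasurableSpace G] [MeasurableAdd G]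
    [NormedAddCommGroup F] [NormedSpace ℝ F] {μ : Measure G} [μ.IsAddLeftInvariant] (f : G → F)
    (c : G) (K : Set G) : ∫ z in c +ᵥ K, f z ∂μ = ∫ z in K, f (c + z) ∂μ :=
  (measurePreserving_add_left μ c).setIntegral_image_emb (measurableEmbedding_addLeft c) f K

variable {E : Type*} [NormedAddCommGroup E] [NormedSpace ℝ E] [FiniteDimensional ℝ E]
  [MeasurableSpace E] [BorelSpace E] {μ : Measure E} [μ.IsAddHaarMeasure]

theorem addHaar_vadd_span_singleton (hE : 1 < Module.finrank ℝ E)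
    (c v : E) : μ (c +ᵥ (Submodule.span ℝ {v} : Set E)) = 0 := by
  rw [measure_vadd]
  refine Measure.addHaar_submodule μ _ fun htop => ?_
  have := finrank_span_le_card (R := ℝ) ({v} : Set E)
  rw [htop, finrank_top, Set.toFinset_singleton, Finset.card_singleton] at this
  exact this.not_gt hE

theorem addHaar_symSegment (hE : 1 < Module.finrank ℝ E) (v : E) : μ (symSegment v) = 0 :=
  measure_mono_null (symSegment_subset_span v) <| by
    simpa only [zero_vadd] using addHaar_vadd_span_singleton (μ := μ) hE 0 v

theorem IsDissection.setIntegral_add {F : Type*} [NormedAddCommGroup F] [NormedSpace ℝ F]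
    (hE : 1 < Module.finrank ℝ E) {K : Set E} {q v w : E} (h : IsDissection K q v w)
    (hK : IsCompact K) {f : E → F} (hf : Continuous f) :
    (∫ z in K + symSegment v + symSegment w, f z ∂μ) + ∫ z in (v - w) +ᵥ K, f z ∂μ =
      (∫ z in -w +ᵥ (K + symSegment v), f z ∂μ) + (∫ z in v +ᵥ (K + symSegment w), f z ∂μ) +
        ∫ z in q +ᵥ (symSegment v + symSegment w), f z ∂μ := by
  have hA : IsCompact (-w +ᵥ (K + symSegment v)) := (hK.add (isCompact_symSegment v)).vadd _
  have hB : IsCompact (v +ᵥ (K + symSegment w)) := (hK.add (isCompact_symSegment w)).vadd _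
  have hC : IsCompact (q +ᵥ (symSegment v + symSegment w)) :=
    ((isCompact_symSegment v).add (isCompact_symSegment w)).vadd _
  have hint {A : Set E} (hA : IsCompact A) : IntegrableOn f A μ :=
    hf.continuousOn.integrableOn_compact hA
  have hdisj : AEDisjoint μ ((-w +ᵥ (K + symSegment v)) ∪ (v +ᵥ (K + symSegment w)))
      (q +ᵥ (symSegment v + symSegment w)) :=
    measure_mono_null h.inter_subset (measure_union_null
      (addHaar_vadd_span_singleton hE _ _) (addHaar_vadd_span_singleton hE _ _))
  rw [h.eq_union, setIntegral_union₀ hdisj hC.measurableSet.nullMeasurableSet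
      (hint (hA.union hB)) (hint hC), ← h.inter_eq,
    ← setIntegral_union_add_setIntegral_inter hB.measurableSet (hint hA) (hint hB)]
  abel

theorem IsDissection.measureReal_add (hE : 1 < Module.finrank ℝ E)
    {K : Set E} {q v w : E} (h : IsDissection K q v w) (hK : IsCompact K) :
    μ.real (K + symSegment v + symSegment w) + μ.real K =
      μ.real (K + symSegment v) + μ.real (K + symSegment w) +
        μ.real (symSegment v + symSegment w) := by
  simpa [measureReal_def] using! h.setIntegral_add hE hK (μ := μ) (continuous_const (y := (1 : ℝ)))

end DissectionIntegral

section SecondMoment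

variable {E : Type*} [NormedAddCommGroup E] [InnerProductSpace ℝ E] [FiniteDimensional ℝ E]
  [MeasurableSpace E] [BorelSpace E] {K : Set E}

/-- The second moment `∫_K |z|² dz` of `K` about the origin. -/
noncomputable def secondMoment (K : Set E) : ℝ := ∫ z in K, ‖z‖ ^ 2

theorem secondMoment_image {F : Type*} [NormedAddCommGroup F] [InnerProductSpace ℝ F]
    [FiniteDimensional ℝ F] [MeasurableSpace F] [BorelSpace F] (L : E ≃ₗᵢ[ℝ] F) (K : Set E) :
    secondMoment (L '' K) = secondMoment K := by
  rw [secondMoment, L.measurePreserving.setIntegral_image_emb L.toHomeomorph.measurableEmbedding]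
  simp only [LinearIsometryEquiv.norm_map, secondMoment]

theorem secondMoment_vadd (hK : IsCompact K) (hsymm : -K = K) (c : E) :
    secondMoment (c +ᵥ K) = secondMoment K + ‖c‖ ^ 2 * volume.real K := by
  have hint {f : E → ℝ} (hf : Continuous f) : IntegrableOn f K :=
    hf.continuousOn.integrableOn_compact hK
  have hneg : ∫ z in K, ‖c + z‖ ^ 2 = ∫ z in K, ‖c - z‖ ^ 2 := by
    conv_lhs => rw [← hsymm, ← Set.image_neg_eq_neg]
    simpa only [← sub_eq_add_neg] using (Measure.measurePreserving_neg volume).setIntegral_image_emb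
      (MeasurableEquiv.neg E).measurableEmbedding (fun z => ‖c + z‖ ^ 2) K
  have hadd : (∫ z in K, ‖c + z‖ ^ 2) + ∫ z in K, ‖c - z‖ ^ 2 =
      2 * (‖c‖ ^ 2 * volume.real K + ∫ z in K, ‖z‖ ^ 2) := by
    rw [← integral_add (hint (by fun_prop)) (hint (by fun_prop))]
    simp only [parallelogram_law_with_norm ℝ]
    rw [integral_const_mul, integral_add (hint (by fun_prop)) (hint (by fun_prop)),
      setIntegral_const, smul_eq_mul, mul_comm (volume.real K)]
  rw [secondMoment, secondMoment, setIntegral_vadd]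
  linarith

theorem secondMoment_eq_zero (h : volume K = 0) : secondMoment K = 0 :=
  setIntegral_measure_zero _ h

theorem IsDissection.secondMoment_add (hE : 1 < Module.finrank ℝ E) {q v w : E}
    (h : IsDissection K q v w) (hK : IsCompact K) (hsymm : -K = K) :
    secondMoment (K + symSegment v + symSegment w) +
        (secondMoment K + ‖v - w‖ ^ 2 * volume.real K) =
      (secondMoment (K + symSegment v) + ‖w‖ ^ 2 * volume.real (K + symSegment v)) +
        (secondMoment (K + symSegment w) + ‖v‖ ^ 2 * volume.real (K + symSegment w)) +
        (secondMoment (symSegment v + symSegment w) +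
          ‖q‖ ^ 2 * volume.real (symSegment v + symSegment w)) := by
  have hv := isCompact_symSegment v
  have hw := isCompact_symSegment w
  rw [← secondMoment_vadd hK hsymm, ← norm_neg w, ← secondMoment_vadd (hK.add hv),
    ← secondMoment_vadd (hK.add hw), ← secondMoment_vadd (hv.add hw)]
  · exact h.setIntegral_add hE hK (by fun_prop)
  all_goals simp only [neg_add, neg_symSegment, hsymm]

end SecondMoment

section Parallelogram

open scoped ComplexConjugate

theorem setIntegral_image_linearMap {E F : Type*} [NormedAddCommGroup E] [NormedSpace ℝ E]
    [FiniteDimensional ℝ E] [MeasurableSpace E] [BorelSpace E] {μ : Measure E} [μ.IsAddHaarMeasure]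
    [NormedAddCommGroup F] [NormedSpace ℝ F] (T : E →ₗ[ℝ] E) {s : Set E} (hs : MeasurableSet s)
    (f : E → F) : ∫ z in T '' s, f z ∂μ = |LinearMap.det T| • ∫ z in s, f (T z) ∂μ := by
  by_cases hT : LinearMap.det T = 0
  · rw [setIntegral_measure_zero f (by simp [Measure.addHaar_image_linearMap, hT]), hT, abs_zero,
      zero_smul]
  · rw [← integral_smul]
    exact integral_image_eq_integral_abs_det_fderiv_smul μ hs
      (fun x _ => T.toContinuousLinearMap.hasFDerivWithinAt)
      (LinearMap.equivOfDetNeZero T hT).injective.injOn f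

theorem det_basisOneI_constr (v w : ℂ) :
    LinearMap.det (Complex.basisOneI.constr ℝ ![v, w]) = (conj v * w).im := by
  rw [← LinearMap.det_toMatrix Complex.basisOneI, Matrix.det_fin_two]
  simp only [LinearMap.toMatrix_apply, Complex.coe_basisOneI, Matrix.cons_val_zero,
    Matrix.cons_val_one, Matrix.cons_val_fin_one, Module.Basis.constr_apply_fintype,
    Module.Basis.equivFun_apply, Complex.coe_basisOneI_repr, Fin.sum_univ_two, Complex.one_re,
    Complex.one_im, Complex.I_re, Complex.I_im, Complex.mul_im, Complex.conj_re, Complex.conj_im,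
    one_smul, zero_smul, add_zero, zero_add]
  ring

theorem symSegment_add_symSegment_eq_image {E : Type*} [AddCommGroup E] [Module ℝ E] (v w : E) :
    symSegment v + symSegment w =
      (fun p : ℝ × ℝ => p.1 • v + p.2 • w) '' (Set.Icc (-1) 1 ×ˢ Set.Icc (-1) 1) := by
  rw [symSegment_eq_image, symSegment_eq_image, ← Set.add_image_prod, Set.prod_image_image_eq,
    Set.image_image]

theorem setIntegral_parallelogram (v w : ℂ) (f : ℂ → ℝ) :
    ∫ z in symSegment v + symSegment w, f z = |(conj v * w).im| *
      ∫ p in Set.Icc (-1 : ℝ) 1 ×ˢ Set.Icc (-1 : ℝ) 1, f (p.1 • v + p.2 • w) := by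
  let T : ℂ →ₗ[ℝ] ℂ := Complex.basisOneI.constr ℝ ![v, w]
  let e : ℂ ≃ᵐ ℝ × ℝ := Complex.measurableEquivRealProd
  have hT (z : ℂ) : T z = (e z).1 • v + (e z).2 • w := by
    simp [T, e, Module.Basis.constr_apply_fintype]
  have himage : symSegment v + symSegment w =
      T '' (e ⁻¹' (Set.Icc (-1) 1 ×ˢ Set.Icc (-1) 1)) := by
    rw [symSegment_add_symSegment_eq_image, ← e.image_symm, Set.image_image]
    simp only [hT, e.apply_symm_apply]
  rw [himage, setIntegral_image_linearMap T (e.measurable (measurableSet_Icc.prod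
    measurableSet_Icc)), det_basisOneI_constr, smul_eq_mul,
    ← Complex.volume_preserving_equiv_real_prod.setIntegral_preimage_emb e.measurableEmbedding]
  simp only [hT, e]

theorem volumeReal_parallelogram (v w : ℂ) :
    volume.real (symSegment v + symSegment w) = 4 * |(conj v * w).im| := by
  have h := setIntegral_parallelogram v w fun _ => 1
  rw [setIntegral_const, setIntegral_const, Measure.volume_eq_prod, measureReal_prod_prod,
    Real.volume_real_Icc, smul_eq_mul, mul_one] at h
  rw [h]
  norm_num
  ring

theorem secondMoment_parallelogram (v w : ℂ) :
    secondMoment (symSegment v + symSegment w) =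
      4 / 3 * |(conj v * w).im| * (‖v‖ ^ 2 + ‖w‖ ^ 2) := by
  have hsquare (m n : ℕ) : ∫ p in Set.Icc (-1 : ℝ) 1 ×ˢ Set.Icc (-1 : ℝ) 1, p.1 ^ m * p.2 ^ n =
      (1 - (-1) ^ (m + 1)) / (m + 1) * ((1 - (-1) ^ (n + 1)) / (n + 1)) := by
    rw [Measure.volume_eq_prod, setIntegral_prod_mul (fun x => x ^ m) (fun y => y ^ n)]
    simp only [integral_Icc_eq_integral_Ioc, ← intervalIntegral.integral_of_le, integral_pow,
      one_pow, neg_le_self zero_le_one]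
  have hint (m n : ℕ) : IntegrableOn (fun p : ℝ × ℝ => p.1 ^ m * p.2 ^ n)
      (Set.Icc (-1 : ℝ) 1 ×ˢ Set.Icc (-1 : ℝ) 1) :=
    ContinuousOn.integrableOn_compact (isCompact_Icc.prod isCompact_Icc) (by fun_prop)
  have hexpand (p : ℝ × ℝ) : ‖p.1 • v + p.2 • w‖ ^ 2 =
      ‖v‖ ^ 2 * (p.1 ^ 2 * p.2 ^ 0) + 2 * inner ℝ v w * (p.1 ^ 1 * p.2 ^ 1) +
        ‖w‖ ^ 2 * (p.1 ^ 0 * p.2 ^ 2) := by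
    rw [norm_add_sq_real, norm_smul, norm_smul, real_inner_smul_left, real_inner_smul_right,
      mul_pow, mul_pow, Real.norm_eq_abs, Real.norm_eq_abs, sq_abs, sq_abs]
    ring
  rw [secondMoment, setIntegral_parallelogram]
  simp only [hexpand]
  rw [integral_add, integral_add, integral_const_mul, integral_const_mul, integral_const_mul,
    hsquare, hsquare, hsquare]
  · norm_num
    ring
  · exact (hint 2 0).const_mul _
  · exact (hint 1 1).const_mul _
  · exact ((hint 2 0).const_mul _).add ((hint 1 1).const_mul _)
  · exact (hint 0 2).const_mul _

end Parallelogram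

section Zonotope

variable {ι E : Type*}

/-- The zonotope `∑ i ∈ s, [-v i, v i]`. -/
def zonotope [AddCommGroup E] [Module ℝ E] (v : ι → E) (s : Finset ι) : Set E :=
  ∑ i ∈ s, symSegment (v i)

section Module

variable [AddCommGroup E] [Module ℝ E] (v : ι → E) (s : Finset ι)

theorem zonotope_empty : zonotope v ∅ = 0 := Finset.sum_empty

theorem zonotope_insert [DecidableEq ι] {i : ι} (hi : i ∉ s) :
    zonotope v (insert i s) = zonotope v s + symSegment (v i) := by
  rw [zonotope, Finset.sum_insert hi, add_comm, zonotope]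

theorem image_zonotope {F : Type*} [AddCommGroup F] [Module ℝ F] (f : E →ₗ[ℝ] F) :
    f '' zonotope v s = zonotope (fun i => f (v i)) s := by
  rw [zonotope, Set.image_finsetSum]
  simp only [image_symSegment, zonotope]

theorem convex_zonotope : Convex ℝ (zonotope v s) :=
  convex_sum _ fun i _ => convex_symSegment (v i)

theorem neg_zonotope : -zonotope v s = zonotope v s := by
  simp only [zonotope, ← Finset.sum_neg_distrib, neg_symSegment]

theorem neg_sum_mem_zonotope : -∑ i ∈ s, v i ∈ zonotope v s := by
  rw [← Finset.sum_neg_distrib]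
  exact Set.finsetSum_mem_finsetSum s _ _ fun i _ => neg_self_mem_symSegment (v i)

theorem InAngle.add {K L : Set E} {p q v w : E} (hK : InAngle K p v w) (hL : InAngle L q v w) :
    InAngle (K + L) (p + q) v w := by
  rintro _ ⟨k, hk, l, hl, rfl⟩
  obtain ⟨x, y, hx, hy, rfl⟩ := hK k hk
  obtain ⟨x', y', hx', hy', rfl⟩ := hL l hl
  exact ⟨x + x', y + y', add_nonneg hx hx', add_nonneg hy hy', by module⟩

theorem inAngle_symSegment {u v w : E} {x y : ℝ} (hx : 0 ≤ x) (hy : 0 ≤ y)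
    (hu : u = x • v - y • w) : InAngle (symSegment u) (-u) v w := by
  intro z hz
  obtain ⟨t, ⟨ht, -⟩, rfl⟩ := mem_symSegment.1 hz
  have ht' : 0 ≤ t + 1 := by linarith
  exact ⟨(t + 1) * x, (t + 1) * y, mul_nonneg ht' hx, mul_nonneg ht' hy, by rw [hu]; module⟩

theorem inAngle_zonotope {p q : E} (h : ∀ i ∈ s, ∃ x y : ℝ, 0 ≤ x ∧ 0 ≤ y ∧ v i = x • p - y • q) :
    InAngle (zonotope v s) (-∑ i ∈ s, v i) p q := by
  classical
  induction s using Finset.induction_on with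
  | empty =>
    rintro _ rfl
    exact ⟨0, 0, le_rfl, le_rfl, by simp⟩
  | insert i s hi ih =>
    rw [Finset.forall_mem_insert] at h
    obtain ⟨⟨x, y, hx, hy, hv⟩, hs⟩ := h
    rw [zonotope_insert v s hi, Finset.sum_insert hi, neg_add_rev]
    exact (ih hs).add (inAngle_symSegment hx hy hv)

end Module

theorem isCompact_zonotope [NormedAddCommGroup E] [NormedSpace ℝ E] (v : ι → E) (s : Finset ι) :
    IsCompact (zonotope v s) := by
  classical
  induction s using Finset.induction_on with
  | empty => exact zonotope_empty v ▸ isCompact_singleton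
  | insert i s hi ih => exact zonotope_insert v s hi ▸ ih.add (isCompact_symSegment (v i))

end Zonotope

section Edge

open scoped ComplexConjugate

theorem linearIndependent_of_im_conj_mul_ne_zero {v w : ℂ} (h : (conj v * w).im ≠ 0) :
    LinearIndependent ℝ ![v, w] := by
  refine LinearIndependent.pair_iff.2 fun s t hst => ?_
  have hre := congrArg Complex.re hst
  have him := congrArg Complex.im hst
  simp only [Complex.add_re, Complex.add_im, Complex.smul_re, Complex.smul_im, smul_eq_mul,
    Complex.zero_re, Complex.zero_im] at hre him
  simp only [Complex.mul_im, Complex.conj_re, Complex.conj_im] at h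
  constructor
  · refine (mul_eq_zero.1 ?_).resolve_right h
    linear_combination w.im * hre - w.re * him
  · refine (mul_eq_zero.1 ?_).resolve_right h
    linear_combination v.re * him - v.im * hre

/-- The unit vector with argument `θ`. -/
noncomputable def direction (θ : ℝ) : ℂ := ⟨Real.cos θ, Real.sin θ⟩

theorem norm_direction (θ : ℝ) : ‖direction θ‖ = 1 := by
  rw [← sq_eq_sq₀ (norm_nonneg _) zero_le_one, Complex.sq_norm, Complex.normSq_apply, direction]
  simp only [← sq, Real.cos_sq_add_sin_sq, one_pow]

theorem direction_add_pi (θ : ℝ) : direction (θ + Real.pi) = -direction θ := by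
  apply Complex.ext <;> simp [direction]

theorem conj_direction_mul_direction (α β : ℝ) :
    conj (direction α) * direction β = direction (β - α) := by
  apply Complex.ext <;> simp only [direction, Complex.mul_re, Complex.mul_im, Complex.conj_re,
    Complex.conj_im, Real.cos_sub, Real.sin_sub] <;> ring

theorem direction_eq_smul_sub_smul (α : ℝ) {β γ : ℝ} (h : Real.sin (γ - β) ≠ 0) :
    direction α = (Real.sin (γ - α) / Real.sin (γ - β)) • direction β -
      (Real.sin (β - α) / Real.sin (γ - β)) • direction γ := by
  have hsum : Real.sin (γ - β) • direction α =
      Real.sin (γ - α) • direction β - Real.sin (β - α) • direction γ := by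
    apply Complex.ext <;> simp only [direction, Complex.sub_re, Complex.sub_im, Complex.smul_re,
      Complex.smul_im, smul_eq_mul, Real.sin_sub] <;> ring
  rw [div_eq_inv_mul, div_eq_inv_mul, mul_smul, mul_smul, ← smul_sub, ← hsum, smul_smul,
    inv_mul_cancel₀ h, one_smul]

variable {ι : Type*}

/-- The vector of length `a i` with argument `θ i`, half a side of the polygon
`zonotope (edge θ a) s`. -/
noncomputable def edge (θ : ι → ℝ) (a : ι → NNReal) (i : ι) : ℂ := (a i : ℝ) • direction (θ i)

theorem norm_edge (θ : ι → ℝ) (a : ι → NNReal) (i : ι) : ‖edge θ a i‖ = a i := by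
  rw [edge, norm_smul, norm_direction, mul_one, NNReal.norm_eq]

theorem conj_edge_mul_edge (θ : ι → ℝ) (a : ι → NNReal) (i j : ι) :
    conj (edge θ a i) * edge θ a j = ((a i : ℝ) * a j) • direction (θ j - θ i) := by
  rw [edge, edge, ← conj_direction_mul_direction]
  simp only [Complex.real_smul, map_mul, Complex.conj_ofReal, Complex.ofReal_mul]
  ring

theorem im_conj_edge_mul_edge (θ : ι → ℝ) (a : ι → NNReal) (i j : ι) :
    (conj (edge θ a i) * edge θ a j).im = a i * a j * Real.sin (θ j - θ i) := by
  rw [conj_edge_mul_edge, Complex.smul_im, smul_eq_mul, direction]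

theorem inner_edge (θ : ι → ℝ) (a : ι → NNReal) (i j : ι) :
    inner ℝ (edge θ a i) (edge θ a j) = a i * a j * Real.cos (θ j - θ i) := by
  rw [Complex.inner, mul_comm, conj_edge_mul_edge, Complex.smul_re, smul_eq_mul, direction]

theorem sin_sub_nonneg {θ : ι → ℝ} (hθ : ∀ i j, θ j - θ i < Real.pi) {i j : ι}
    (hij : θ i ≤ θ j) : 0 ≤ Real.sin (θ j - θ i) :=
  Real.sin_nonneg_of_nonneg_of_le_pi (sub_nonneg.2 hij) (hθ i j).le

theorem isDissection_zonotope_edge {θ : ι → ℝ} (hθ : ∀ i j, θ j - θ i < Real.pi) {s : Finset ι}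
    {c d : ι} (hs : ∀ i ∈ s, θ i ≤ θ c) (hcd : θ c ≤ θ d) (a : ι → NNReal) :
    IsDissection (zonotope (edge θ a) s) (-∑ i ∈ s, edge θ a i) (edge θ a c) (edge θ a d) := by
  have hK := convex_zonotope (edge θ a) s
  have hq := neg_sum_mem_zonotope (edge θ a) s
  by_cases hray : SameRay ℝ (edge θ a c) (edge θ a d)
  · exact isDissection_of_sameRay hK hq hray
  have hc : (a c : ℝ) ≠ 0 := fun h => hray (by simp [edge, h])
  have hd : (a d : ℝ) ≠ 0 := fun h => hray (by simp [edge, h])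
  have hcd' : θ c ≠ θ d := fun h => hray <| by
    rw [edge, edge, h]
    exact sameRay_smul_smul_of_mul_nonneg (mul_nonneg (a c).2 (a d).2)
  have hsin : 0 < Real.sin (θ d - θ c) :=
    Real.sin_pos_of_pos_of_lt_pi (sub_pos.2 (hcd.lt_of_ne hcd')) (hθ c d)
  refine isDissection_of_inAngle hK hq (inAngle_zonotope _ s fun i hi => ?_) ?_
  · have hic := sin_sub_nonneg hθ (hs i hi)
    have hid := sin_sub_nonneg hθ ((hs i hi).trans hcd)
    refine ⟨a i * (Real.sin (θ d - θ i) / Real.sin (θ d - θ c)) / a c,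
      a i * (Real.sin (θ c - θ i) / Real.sin (θ d - θ c)) / a d, by positivity, by positivity, ?_⟩
    simp only [edge, smul_smul, div_mul_cancel₀ _ hc, div_mul_cancel₀ _ hd]
    rw [mul_smul, mul_smul, ← smul_sub, ← direction_eq_smul_sub_smul _ hsin.ne']
  · refine linearIndependent_of_im_conj_mul_ne_zero ?_
    rw [im_conj_edge_mul_edge]
    positivity

end Edge

section Increment

variable {ι : Type*} {θ : ι → ℝ}

theorem one_lt_finrank_complex : 1 < Module.finrank ℝ ℂ := by
  rw [Complex.finrank_real_complex]
  exact one_lt_two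

theorem volumeReal_symSegment_edge_add (hθ : ∀ i j, θ j - θ i < Real.pi) {i j : ι}
    (hij : θ i ≤ θ j) (a : ι → NNReal) :
    volume.real (symSegment (edge θ a i) + symSegment (edge θ a j)) =
      4 * (a i * a j * Real.sin (θ j - θ i)) := by
  have := sin_sub_nonneg hθ hij
  rw [volumeReal_parallelogram, im_conj_edge_mul_edge, abs_of_nonneg (by positivity)]

theorem secondMoment_symSegment_edge_add (hθ : ∀ i j, θ j - θ i < Real.pi) {i j : ι}
    (hij : θ i ≤ θ j) (a : ι → NNReal) :
    secondMoment (symSegment (edge θ a i) + symSegment (edge θ a j)) =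
      4 / 3 * (a i * a j * Real.sin (θ j - θ i)) * (a i ^ 2 + a j ^ 2) := by
  have := sin_sub_nonneg hθ hij
  rw [secondMoment_parallelogram, im_conj_edge_mul_edge, abs_of_nonneg (by positivity),
    norm_edge, norm_edge]

theorem volumeReal_zonotope_edge_add (hθ : ∀ i j, θ j - θ i < Real.pi) {s : Finset ι} {d : ι}
    (hs : ∀ i ∈ s, θ i ≤ θ d) (a : ι → NNReal) :
    volume.real (zonotope (edge θ a) s + symSegment (edge θ a d)) =
      volume.real (zonotope (edge θ a) s) + 4 * ∑ i ∈ s, a i * a d * Real.sin (θ d - θ i) := by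
  classical
  induction s using Finset.induction_on_max_value θ generalizing d with
  | empty =>
    simp [zonotope_empty, measureReal_def, addHaar_symSegment one_lt_finrank_complex,
      ← Set.singleton_zero]
  | insert c s hc hmax ih =>
    rw [Finset.forall_mem_insert] at hs
    have hdissect := (isDissection_zonotope_edge hθ hmax hs.1 a).measureReal_add (μ := volume)
      one_lt_finrank_complex (isCompact_zonotope _ s)
    rw [ih hs.2, volumeReal_symSegment_edge_add hθ hs.1] at hdissect
    rw [zonotope_insert _ s hc, Finset.sum_insert hc]
    linarith

theorem secondMoment_zonotope_edge_add_add (hθ : ∀ i j, θ j - θ i < Real.pi) {s : Finset ι}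
    {c d : ι} (hs : ∀ i ∈ s, θ i ≤ θ c) (hcd : θ c ≤ θ d) (a : ι → NNReal) :
    secondMoment (zonotope (edge θ a) s + symSegment (edge θ a c) + symSegment (edge θ a d)) -
        secondMoment (zonotope (edge θ a) s + symSegment (edge θ a c)) =
      secondMoment (zonotope (edge θ a) s + symSegment (edge θ a d)) -
          secondMoment (zonotope (edge θ a) s) +
        4 * a d ^ 2 * ∑ i ∈ s, a i * a c * Real.sin (θ c - θ i) +
        4 * a c ^ 2 * ∑ i ∈ s, a i * a d * Real.sin (θ d - θ i) +
        2 * (a c * a d) * (Real.cos (θ d - θ c) * volume.real (zonotope (edge θ a) s) +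
          2 * Real.sin (θ d - θ c) * ‖∑ i ∈ s, edge θ a i‖ ^ 2) +
        4 / 3 * (a c * a d * Real.sin (θ d - θ c)) * (a c ^ 2 + a d ^ 2) := by
  have h := (isDissection_zonotope_edge hθ hs hcd a).secondMoment_add one_lt_finrank_complex
    (isCompact_zonotope _ s) (neg_zonotope _ s)
  rw [volumeReal_zonotope_edge_add hθ hs, volumeReal_symSegment_edge_add hθ hcd,
    volumeReal_zonotope_edge_add hθ fun i hi => (hs i hi).trans hcd,
    secondMoment_symSegment_edge_add hθ hcd, norm_sub_sq_real, inner_edge, norm_neg, norm_edge,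
    norm_edge] at h
  linarith

theorem sum_mul_sin_mem_nonnegPolynomials {s : Finset ι} {d : ι} {φ : ι → ℝ}
    (hφ : ∀ i ∈ s, 0 ≤ Real.sin (φ i)) :
    (fun a : ι → NNReal => ∑ i ∈ s, a i * a d * Real.sin (φ i)) ∈ nonnegPolynomials ι :=
  sum_mem_nonnegPolynomials fun i hi => mul_mem (mul_mem (coord_mem_nonnegPolynomials i)
    (coord_mem_nonnegPolynomials d)) (const_mem_nonnegPolynomials (hφ i hi))

theorem norm_edge_add_sum_edge_sq (s : Finset ι) (c : ι) (a : ι → NNReal) :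
    ‖edge θ a c + ∑ i ∈ s, edge θ a i‖ ^ 2 = ‖∑ i ∈ s, edge θ a i‖ ^ 2 +
      2 * ∑ i ∈ s, a i * a c * Real.cos (θ c - θ i) + a c ^ 2 := by
  rw [add_comm, norm_add_sq_real, sum_inner, norm_edge]
  simp only [inner_edge]

theorem cos_mul_volumeReal_add_sin_mul_norm_sq_mem_nonnegPolynomials
    (hθ : ∀ i j, θ j - θ i < Real.pi) {s : Finset ι} {β : ℝ} (hβ : 0 ≤ β)
    (hs : ∀ i ∈ s, ∀ j ∈ s, θ j - θ i + β ≤ Real.pi) :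
    (fun a => Real.cos β * volume.real (zonotope (edge θ a) s) +
      2 * Real.sin β * ‖∑ i ∈ s, edge θ a i‖ ^ 2) ∈ nonnegPolynomials ι := by
  classical
  induction s using Finset.induction_on_max_value θ with
  | empty =>
    convert zero_mem (nonnegPolynomials ι) using 1
    ext a
    simp [zonotope_empty, measureReal_def, ← Set.singleton_zero]
  | insert c s hc hmax ih =>
    have hsin : 0 ≤ Real.sin β := Real.sin_nonneg_of_nonneg_of_le_pi hβ <| by
      simpa using hs c (Finset.mem_insert_self c s) c (Finset.mem_insert_self c s)
    have hsin' : ∀ i ∈ s, 0 ≤ Real.sin (θ c - θ i + β) := fun i hi =>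
      Real.sin_nonneg_of_nonneg_of_le_pi (add_nonneg (sub_nonneg.2 (hmax i hi)) hβ)
        (hs i (Finset.mem_insert_of_mem hi) c (Finset.mem_insert_self c s))
    have hsum : ∀ a : ι → NNReal, ∑ i ∈ s, a i * a c * Real.sin (θ c - θ i + β) =
        Real.cos β * ∑ i ∈ s, a i * a c * Real.sin (θ c - θ i) +
          Real.sin β * ∑ i ∈ s, a i * a c * Real.cos (θ c - θ i) := fun a => by
      simp only [Real.sin_add, Finset.mul_sum, ← Finset.sum_add_distrib]
      exact Finset.sum_congr rfl fun i _ => by ring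
    have hmem := add_mem (add_mem
      (ih fun i hi j hj => hs i (Finset.mem_insert_of_mem hi) j (Finset.mem_insert_of_mem hj))
      (mul_mem (const_mem_nonnegPolynomials zero_le_four)
        (sum_mul_sin_mem_nonnegPolynomials (d := c) hsin')))
      (mul_mem (const_mem_nonnegPolynomials (mul_nonneg zero_le_two hsin))
        (pow_mem (coord_mem_nonnegPolynomials c) 2))
    convert hmem using 1
    ext a
    simp only [Pi.add_apply, Pi.mul_apply, Pi.pow_apply]
    rw [zonotope_insert _ s hc, volumeReal_zonotope_edge_add hθ hmax, Finset.sum_insert hc,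
      norm_edge_add_sum_edge_sq, hsum]
    ring

theorem secondMoment_zonotope_edge_add_sub_mem_nonnegPolynomials
    (hθ : ∀ i j, θ j - θ i < Real.pi) {s : Finset ι} {d : ι} (hs : ∀ i ∈ s, θ i ≤ θ d) :
    (fun a => secondMoment (zonotope (edge θ a) s + symSegment (edge θ a d)) -
      secondMoment (zonotope (edge θ a) s)) ∈ nonnegPolynomials ι := by
  classical
  induction s using Finset.induction_on_max_value θ generalizing d with
  | empty =>
    convert zero_mem (nonnegPolynomials ι) using 1
    ext a
    have hd := secondMoment_eq_zero (addHaar_symSegment (μ := volume) one_lt_finrank_complex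
      (edge θ a d))
    simp [zonotope_empty, hd, secondMoment_eq_zero, ← Set.singleton_zero]
  | insert c s hc hmax ih =>
    rw [Finset.forall_mem_insert] at hs
    have hsin := sin_sub_nonneg hθ hs.1
    have hmixed := cos_mul_volumeReal_add_sin_mul_norm_sq_mem_nonnegPolynomials hθ (s := s)
      (sub_nonneg.2 hs.1) fun i _ j hj => by linarith [hmax j hj, hθ i d]
    have hc_coord := coord_mem_nonnegPolynomials c
    have hd_coord := coord_mem_nonnegPolynomials d
    have hc_sum := sum_mul_sin_mem_nonnegPolynomials (d := c)
      fun i hi => sin_sub_nonneg hθ (hmax i hi)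
    have hd_sum := sum_mul_sin_mem_nonnegPolynomials (d := d)
      fun i hi => sin_sub_nonneg hθ (hs.2 i hi)
    have hmem := add_mem (add_mem (add_mem (add_mem (ih hs.2)
      (mul_mem (mul_mem (const_mem_nonnegPolynomials zero_le_four) (pow_mem hd_coord 2)) hc_sum))
      (mul_mem (mul_mem (const_mem_nonnegPolynomials zero_le_four) (pow_mem hc_coord 2)) hd_sum))
      (mul_mem (mul_mem (const_mem_nonnegPolynomials zero_le_two) (mul_mem hc_coord hd_coord))
        hmixed))
      (mul_mem (mul_mem (const_mem_nonnegPolynomials (by norm_num : (0 : ℝ) ≤ 4 / 3))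
        (mul_mem (mul_mem hc_coord hd_coord) (const_mem_nonnegPolynomials hsin)))
        (add_mem (pow_mem hc_coord 2) (pow_mem hd_coord 2)))
    convert hmem using 1
    ext a
    rw [zonotope_insert _ s hc, secondMoment_zonotope_edge_add_add hθ hmax hs.1]
    rfl

theorem secondMoment_zonotope_edge_mem_nonnegPolynomials (hθ : ∀ i j, θ j - θ i < Real.pi)
    (s : Finset ι) : (fun a => secondMoment (zonotope (edge θ a) s)) ∈ nonnegPolynomials ι := by
  classical
  induction s using Finset.induction_on_max_value θ with
  | empty =>
    convert zero_mem (nonnegPolynomials ι) using 1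
    ext a
    simp [zonotope_empty, secondMoment_eq_zero, ← Set.singleton_zero]
  | insert c s hc hmax ih =>
    convert add_mem ih (secondMoment_zonotope_edge_add_sub_mem_nonnegPolynomials hθ hmax) using 1
    ext a
    rw [zonotope_insert _ s hc]
    exact (add_sub_cancel _ _).symm

end Increment

section Polar

theorem exists_symSegment_eq_symSegment_smul_direction (z : ℂ) :
    ∃ r : NNReal, ∃ θ ∈ Set.Ico 0 Real.pi, symSegment z = symSegment ((r : ℝ) • direction θ) := by
  have hz : symSegment z = symSegment (‖z‖ • direction z.arg) := by
    congr 1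
    apply Complex.ext <;> simp [direction]
  rw [hz]
  rcases lt_or_ge z.arg 0 with hneg | hnonneg
  · refine ⟨‖z‖₊, z.arg + Real.pi, ⟨by linarith [Complex.neg_pi_lt_arg z], by linarith⟩, ?_⟩
    rw [direction_add_pi, smul_neg, symSegment_neg, coe_nnnorm]
  rcases (Complex.arg_le_pi z).eq_or_lt with hpi | hlt
  · refine ⟨‖z‖₊, 0, ⟨le_rfl, Real.pi_pos⟩, ?_⟩
    rw [hpi, ← zero_add Real.pi, direction_add_pi, smul_neg, symSegment_neg, coe_nnnorm]
  · exact ⟨‖z‖₊, z.arg, ⟨hnonneg, hlt⟩, rfl⟩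

theorem exists_edge_zonotope_smul_eq {ι : Type*} (v : ι → ℂ) :
    ∃ (r : ι → NNReal) (θ : ι → ℝ), (∀ i j, θ j - θ i < Real.pi) ∧
      ∀ (s : Finset ι) (a : ι → NNReal),
        zonotope (fun i => (a i : ℝ) • v i) s = zonotope (edge θ (r * a)) s := by
  choose r θ hθ hr using fun i => exists_symSegment_eq_symSegment_smul_direction (v i)
  refine ⟨r, θ, fun i j => by linarith [(hθ i).1, (hθ j).2], fun s a => ?_⟩
  refine Finset.sum_congr rfl fun i _ => ?_
  rw [symSegment_smul, hr, ← symSegment_smul, smul_smul, mul_comm]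
  rfl

end Polar

theorem stmt19_general {ι E : Type*} [Fintype ι] [NormedAddCommGroup E] [InnerProductSpace ℝ E]
    [FiniteDimensional ℝ E] [MeasurableSpace E] [BorelSpace E] (hE : Module.finrank ℝ E = 2)
    (u : ι → E) :
    ∃ p : MvPolynomial ι ℝ, (∀ n, 0 ≤ MvPolynomial.coeff n p) ∧
      ∀ lam : ι → ℝ, (∀ i, 0 ≤ lam i) →
        (∫ s in (∑ i, segment ℝ (-(lam i • u i)) (lam i • u i)), ‖s‖ ^ 2 ∂volume)
          = MvPolynomial.eval lam p := by
  let L : E ≃ₗᵢ[ℝ] ℂ :=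
    (stdOrthonormalBasis ℝ E).equiv Complex.orthonormalBasisOneI (finCongr hE)
  obtain ⟨r, θ, hθ, hzonotope⟩ := exists_edge_zonotope_smul_eq (L ∘ u)
  obtain ⟨p, hp, heval⟩ := exists_mvPolynomial_of_mem_nonnegPolynomials <|
    comp_mul_left_mem_nonnegPolynomials
      (secondMoment_zonotope_edge_mem_nonnegPolynomials hθ Finset.univ) r
  refine ⟨p, hp, fun lam hlam => ?_⟩
  lift lam to ι → NNReal using hlam
  calc ∫ s in ∑ i, segment ℝ (-((lam i : ℝ) • u i)) ((lam i : ℝ) • u i), ‖s‖ ^ 2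
    _ = secondMoment (zonotope (fun i => (lam i : ℝ) • u i) Finset.univ) := rfl
    _ = secondMoment (L '' zonotope (fun i => (lam i : ℝ) • u i) Finset.univ) :=
      (secondMoment_image L _).symm
    _ = secondMoment (zonotope (fun i => L ((lam i : ℝ) • u i)) Finset.univ) :=
      congrArg secondMoment (image_zonotope _ _ L.toLinearEquiv.toLinearMap)
    _ = secondMoment (zonotope (edge θ (r * lam)) Finset.univ) := by
      simp only [map_smul]
      exact congrArg secondMoment (hzonotope Finset.univ lam)
    _ = MvPolynomial.eval (fun i => (lam i : ℝ)) p := heval lam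

/-- For a planar zonotope `K = Σ_{i=1}^m λ_i [−u_i, u_i]` (Minkowski sum of
centrally symmetric segments, `λ_i ≥ 0`), `∫_K |s|² ds` is a polynomial in `(λ₁,…,λ_m)`
with nonnegative coefficients. -/
theorem stmt19 (m : ℕ) (u : Fin m → EuclideanSpace ℝ (Fin 2)) :
    ∃ p : MvPolynomial (Fin m) ℝ, (∀ n, 0 ≤ MvPolynomial.coeff n p) ∧
      ∀ lam : Fin m → ℝ, (∀ i, 0 ≤ lam i) →
        (∫ s in (∑ i, segment ℝ (-(lam i • u i)) (lam i • u i)), ‖s‖ ^ 2 ∂volume)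
          = MvPolynomial.eval lam p :=
  stmt19_general finrank_euclideanSpace_fin u
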